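/- Let Ω satisfy (H). For 0<s<1 define W_{(s)}(x)=|x|^{−s}·(1/s+Ω(θ(x)))−1/s+|x|² and Ω̃_{(s)}(φ)=τ_{2−s}·∫_{−π}^{π}|cos(φ−θ)|^{−2+s}·(Ω(θ)−Ω(φ+π/2))dθ + c_s·(1/s+Ω(φ+π/2)). Then: (i) W_{(s)} converges to W_log uniformly on every compact subset of ℝ²∖{0} as s→0⁺; (ii) for every φ the principal value limit defining Ω̃_log(φ) exists, and Ω̃_{(s)} converges to Ω̃_log uniformly in φ as s→0⁺; (iii) there is a constant c such that Ω(θ) = −∫_{−π}^{π} ln|cos(φ−θ)|·Ω̃_log(φ) dφ + c for all θ. -/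

import Mathlib

/-!
Everything about the transformed angle functions rests on one substitution. Putting
`θ = φ + π/2 + t` turns the kernel `|cos(φ - θ)|` into `|sin t|`; since `Ω` has period `π`, the
integral over `[-π, π]` is twice the one over `t ∈ [0, π]`, and averaging over the reflection
`t ↦ π - t` replaces the first difference `Ω(ψ + t) - Ω(ψ)`, `ψ = φ + π/2`, by the second difference
`Ω(ψ + t) + Ω(ψ - t) - 2Ω(ψ)` (`integral_weight_eq`). The latter is `O(sin² t)` uniformly in `ψ`
(`exists_quo_bound`), so its quotient by `sin² t` is bounded and the singular integral has the
regularized form `hyp Ω ψ`.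

Hence the truncated integrals converge by dominated convergence, to the value `omtLim`
(`tendsto_OmtLogFam`). For `0 < s < 1` the integral in `Ω̃_{(s)}` is that of `sin^s t` against the
same bounded quotient, so its distance to `hyp Ω ψ` is at most a constant times
`∫ (1 - sin^s t) dt → 0`, uniformly in `φ`; together with `τ_{2-s} → -(2π)^{-2}`,
`c_s / s → 1/(2π)` and `c_s → 0` this is `tendstoUniformly_Omts`. The convergence of the potentials
is the expansion `|x|^{-s} = 1 - s ln|x| + O(s²)` with `ln|x|` bounded on compact subsets of the
punctured plane (`tendstoUniformlyOn_Wsfam`).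

The inversion formula is checked on Fourier modes `e^{2ikx}` with `k ≠ 0`. The operator `hyp`
multiplies the mode by `-4 ∫₀^π sin²(kt)/sin² t dt = -4π|k|`, a Fejér integral (`fc_hyp`), and
convolution with `log|sin|` multiplies it by `-π/(2|k|)` (`fc_logConv`). The composition is
multiplication by `2π²`, so `Ω - (2π²)⁻¹ logConv (hyp Ω)` is a continuous function whose nonzero
modes all vanish, that is, a constant (`exists_const_logConv_hyp`).
-/

open MeasureTheory Real Filter Set Topology
open scoped ENNReal

noncomputable section

namespace Aniso

/-- The Euclidean norm on `ℝ × ℝ`. -/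
def nrm (x : ℝ × ℝ) : ℝ := Real.sqrt (x.1 ^ 2 + x.2 ^ 2)

/-- The angle `θ(x) ∈ [-π, π)` of a nonzero point `x ∈ ℝ²`,
so that `x / |x| = (cos (ang x), sin (ang x))`. -/
def ang (x : ℝ × ℝ) : ℝ :=
  if Complex.arg ⟨x.1, x.2⟩ = π then -π else Complex.arg ⟨x.1, x.2⟩

/-- The unit vector `e_φ = (cos φ, sin φ)`. -/
def eVec (φ : ℝ) : ℝ × ℝ := (Real.cos φ, Real.sin φ)

/-- The constant `τ_s = (2π)^{-s} Γ(s) cos(sπ/2)`. -/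
def tauC (s : ℝ) : ℝ := (2 * π) ^ (-s) * Real.Gamma s * Real.cos (s * π / 2)

/-- The constant `c_s = π^{s-1} Γ((2-s)/2) / Γ(s/2)`. -/
def cC (s : ℝ) : ℝ := π ^ (s - 1) * Real.Gamma ((2 - s) / 2) / Real.Gamma (s / 2)

/-- Hypothesis (H): `Ω` is smooth, 2π-periodic, strictly positive and π-periodic. -/
def SatisfiesH (Ω : ℝ → ℝ) : Prop :=
  ContDiff ℝ (⊤ : ℕ∞) Ω ∧ (∀ θ, Ω (θ + 2 * π) = Ω θ) ∧ (∀ θ, 0 < Ω θ) ∧ ∀ θ, Ω (θ + π) = Ω θ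

/-- Hypothesis (h): `ω` is smooth, 2π-periodic, nonnegative, not identically zero,
π-periodic, and `ω(π/2) = 0`. -/
def Satisfiesh (ω : ℝ → ℝ) : Prop :=
  ContDiff ℝ (⊤ : ℕ∞) ω ∧ (∀ θ, ω (θ + 2 * π) = ω θ) ∧ (∀ θ, 0 ≤ ω θ) ∧ (∃ θ, ω θ ≠ 0) ∧
    (∀ θ, ω (θ + π) = ω θ) ∧ ω (π / 2) = 0

/-- The transformed angle function `Ω̃`. -/
def Omt (s : ℝ) (Ω : ℝ → ℝ) (φ : ℝ) : ℝ :=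
  tauC (2 - s) * (∫ θ in (-π)..π, |Real.cos (φ - θ)| ^ (-2 + s) * (Ω θ - Ω (φ + π / 2)))
    + cC s * Ω (φ + π / 2)

/-- The interaction potential `W(x) = |x|^{-s} Ω(θ(x)) + |x|²` as an `[0,∞]`-valued
kernel, with `W(0) = ∞`. -/
def Wkernel (s : ℝ) (Ω : ℝ → ℝ) (x : ℝ × ℝ) : ℝ≥0∞ :=
  if x = 0 then ⊤ else ENNReal.ofReal (nrm x ^ (-s) * Ω (ang x) + nrm x ^ 2)

/-- The interaction energy `E[ρ] = (1/2) ∬ W(x-y) dρ(y) dρ(x) ∈ [0,∞]`. -/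
def energy (s : ℝ) (Ω : ℝ → ℝ) (ρ : Measure (ℝ × ℝ)) : ℝ≥0∞ :=
  (1 / 2 : ℝ≥0∞) * ∫⁻ x, ∫⁻ y, Wkernel s Ω (x - y) ∂ρ ∂ρ

/-- The real-valued interaction potential (with junk value `0` at the origin,
which is Lebesgue negligible). -/
def Wr (s : ℝ) (Ω : ℝ → ℝ) (x : ℝ × ℝ) : ℝ := nrm x ^ (-s) * Ω (ang x) + nrm x ^ 2

/-- `ρ` minimizes the energy `E` among probability measures on `ℝ²`. -/
def IsMinimizer (E : Measure (ℝ × ℝ) → ℝ≥0∞) (ρ : Measure (ℝ × ℝ)) : Prop :=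
  IsProbabilityMeasure ρ ∧ ∀ μ : Measure (ℝ × ℝ), IsProbabilityMeasure μ → E ρ ≤ E μ

/-- `ρ` is the unique minimizer of `E` up to translation: it is a minimizer and every
minimizer is a translate of it. -/
def IsUniqueMinimizer (E : Measure (ℝ × ℝ) → ℝ≥0∞) (ρ : Measure (ℝ × ℝ)) : Prop :=
  IsMinimizer E ρ ∧ ∀ μ, IsMinimizer E μ → ∃ v : ℝ × ℝ, μ = Measure.map (fun x => x + v) ρ

def R2 (s : ℝ) : ℝ := (8 * Real.sin (s * π / 2) / (s ^ 2 * (2 + s) * π)) ^ (-(1 / (s + 2)))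

def C2 (s : ℝ) : ℝ := 4 * Real.sin (s * π / 2) / (s ^ 2 * π ^ 2)

/-- The density `ρ₂(x) = C₂ (R₂² - |x|²)₊^{s/2}`. -/
def rho2 (s : ℝ) (x : ℝ × ℝ) : ℝ := C2 s * (max (R2 s ^ 2 - nrm x ^ 2) 0) ^ (s / 2)

def rho2meas (s : ℝ) : Measure (ℝ × ℝ) := volume.withDensity fun x => ENNReal.ofReal (rho2 s x)

/-- Counterclockwise rotation of `ℝ²` by the angle `η`. -/
def Rot (η : ℝ) (x : ℝ × ℝ) : ℝ × ℝ :=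
  (x.1 * Real.cos η - x.2 * Real.sin η, x.1 * Real.sin η + x.2 * Real.cos η)

/-- The measure `ρ_{a,b,η}`: the pushforward of `ρ₂(x) dx` under `x ↦ R_η (a x₁, b x₂)`. -/
def rhoE (s a b η : ℝ) : Measure (ℝ × ℝ) :=
  Measure.map (fun x => Rot η (a * x.1, b * x.2)) (rho2meas s)

/-- The measure `ρ_{a,b} = ρ_{a,b,0}`. -/
def rhoAB (s a b : ℝ) : Measure (ℝ × ℝ) := rhoE s a b 0

/-- The Beta function. -/
def BetaR (x y : ℝ) : ℝ := Real.Gamma x * Real.Gamma y / Real.Gamma (x + y)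

def C1 (s : ℝ) : ℝ := 2 * Real.cos (s * π / 2) / (s * (s + 1) * π)

def R1 (s : ℝ) : ℝ := (C1 s * BetaR (1 / 2) ((3 + s) / 2)) ^ (-(1 / (s + 2)))

/-- The density `ρ₁(t) = C₁ (R₁² - t²)₊^{(1+s)/2}` on `ℝ`. -/
def rho1 (s t : ℝ) : ℝ := C1 s * (max (R1 s ^ 2 - t ^ 2) 0) ^ ((1 + s) / 2)

def rho1meas (s : ℝ) : Measure ℝ := volume.withDensity fun t => ENNReal.ofReal (rho1 s t)

/-- The measure `ρ_{1D}`: the pushforward of `ρ₁(t) dt` under `t ↦ (0, t)`. -/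
def rho1D (s : ℝ) : Measure (ℝ × ℝ) := Measure.map (fun t : ℝ => ((0 : ℝ), t)) (rho1meas s)

/-- The support of a measure: points all of whose neighborhoods have positive measure. -/
def msupport {α : Type*} [TopologicalSpace α] [MeasurableSpace α] (μ : Measure α) : Set α :=
  {x | ∀ U ∈ 𝓝 x, 0 < μ U}

def Acoef (s : ℝ) (Ω : ℝ → ℝ) (a b : ℝ) : ℝ :=
  tauC s * (R1 s / R2 s) ^ (2 + s) *
    ∫ φ in (-π)..π,
      (a ^ 2 * Real.cos φ ^ 2 + b ^ 2 * Real.sin φ ^ 2) ^ (-(2 + s) / 2) *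
        Real.cos φ ^ 2 * Omt s Ω φ

def Bcoef (s : ℝ) (Ω : ℝ → ℝ) (a b : ℝ) : ℝ :=
  tauC s * (R1 s / R2 s) ^ (2 + s) *
    ∫ φ in (-π)..π,
      (a ^ 2 * Real.cos φ ^ 2 + b ^ 2 * Real.sin φ ^ 2) ^ (-(2 + s) / 2) *
        Real.sin φ ^ 2 * Omt s Ω φ

def Dcoef (s : ℝ) (Ω : ℝ → ℝ) (a b : ℝ) : ℝ :=
  tauC s * (R1 s / R2 s) ^ (2 + s) *
    ∫ φ in (-π)..π,
      (a ^ 2 * Real.cos φ ^ 2 + b ^ 2 * Real.sin φ ^ 2) ^ (-(2 + s) / 2) *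
        (Real.cos φ * Real.sin φ) * Omt s Ω φ

def Mfun (s : ℝ) (Ω : ℝ → ℝ) (a b : ℝ) : ℝ :=
  tauC s * (R1 s / R2 s) ^ (2 + s) *
    ∫ φ in (-π)..π, (a ^ 2 * Real.cos φ ^ 2 + b ^ 2 * Real.sin φ ^ 2) ^ (-s / 2) * Omt s Ω φ

def calE (s : ℝ) (Ω : ℝ → ℝ) (a b : ℝ) : ℝ := Mfun s Ω a b + s / 2 * (a ^ 2 + b ^ 2)

/-- A measure has compact support. -/
def HasCompactSupportM (ρ : Measure (ℝ × ℝ)) : Prop :=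
  ∃ K : Set (ℝ × ℝ), IsCompact K ∧ ρ Kᶜ = 0

/-- The linear interpolation `(1-t) ρ₀ + t ρ₁`. -/
def mix (ρ₀ ρ₁ : Measure (ℝ × ℝ)) (t : ℝ) : Measure (ℝ × ℝ) :=
  ENNReal.ofReal (1 - t) • ρ₀ + ENNReal.ofReal t • ρ₁

/-- Linear interpolation convexity (LIC): for any two distinct compactly supported
probability measures of finite energy with the same center of mass, the energy is
strictly convex along their linear interpolation. -/
def LIC (s : ℝ) (Ω : ℝ → ℝ) : Prop :=
  ∀ ρ₀ ρ₁ : Measure (ℝ × ℝ), IsProbabilityMeasure ρ₀ → IsProbabilityMeasure ρ₁ →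
    HasCompactSupportM ρ₀ → HasCompactSupportM ρ₁ →
    energy s Ω ρ₀ < ⊤ → energy s Ω ρ₁ < ⊤ → ρ₀ ≠ ρ₁ →
    (∫ x, x ∂ρ₀) = (∫ x, x ∂ρ₁) →
    StrictConvexOn ℝ (Set.Icc (0 : ℝ) 1) fun t => (energy s Ω (mix ρ₀ ρ₁ t)).toReal

/-- The interaction energy of a bounded compactly supported signed density. -/
def energyR (s : ℝ) (Ω : ℝ → ℝ) (μ : ℝ × ℝ → ℝ) : ℝ :=
  (1 / 2) * ∫ x : ℝ × ℝ, (∫ y : ℝ × ℝ, Wr s Ω (x - y) * μ y) * μ x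

/-- The logarithmic potential `W_log(x) = -ln|x| + Ω(θ(x)) + |x|²` (real valued,
with junk value at the origin). -/
def Wlog (Ω : ℝ → ℝ) (x : ℝ × ℝ) : ℝ := -Real.log (nrm x) + Ω (ang x) + nrm x ^ 2

def WlogKernel (Ω : ℝ → ℝ) (x : ℝ × ℝ) : ℝ≥0∞ :=
  if x = 0 then ⊤ else ENNReal.ofReal (Wlog Ω x)

/-- The logarithmic interaction energy. -/
def energyLog (Ω : ℝ → ℝ) (ρ : Measure (ℝ × ℝ)) : ℝ≥0∞ :=
  (1 / 2 : ℝ≥0∞) * ∫⁻ x, ∫⁻ y, WlogKernel Ω (x - y) ∂ρ ∂ρ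

/-- The family `W_{(s)}(x) = |x|^{-s} (1/s + Ω(θ(x))) - 1/s + |x|²`. -/
def Wsfam (s : ℝ) (Ω : ℝ → ℝ) (x : ℝ × ℝ) : ℝ :=
  nrm x ^ (-s) * (1 / s + Ω (ang x)) - 1 / s + nrm x ^ 2

/-- The transformed angle function of `W_{(s)}`. -/
def Omts (s : ℝ) (Ω : ℝ → ℝ) (φ : ℝ) : ℝ :=
  tauC (2 - s) * (∫ θ in (-π)..π, |Real.cos (φ - θ)| ^ (-2 + s) * (Ω θ - Ω (φ + π / 2)))
    + cC s * (1 / s + Ω (φ + π / 2))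

/-- The truncated integral appearing in the principal value defining `Ω̃_log`. -/
def pvInt (Ω : ℝ → ℝ) (φ δ : ℝ) : ℝ :=
  ∫ θ in {θ : ℝ | θ ∈ Set.Icc (-π) π ∧ δ ≤ |Real.cos (φ - θ)|},
    |Real.cos (φ - θ)| ^ (-(2 : ℝ)) * (Ω θ - Ω (φ + π / 2))

def OmtLogFam (Ω : ℝ → ℝ) (φ δ : ℝ) : ℝ :=
  -((2 * π) ^ (-(2 : ℝ))) * pvInt Ω φ δ + (2 * π)⁻¹

/-- The transformed angle function `Ω̃_log`, defined as the principal value limit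
(via `limUnder`, which returns the limit whenever it exists). -/
def OmtLog (Ω : ℝ → ℝ) (φ : ℝ) : ℝ := limUnder (𝓝[>] (0 : ℝ)) (OmtLogFam Ω φ)

/-- The closed elliptical region `B(0; a, b)`. -/
def ellipseSet (a b : ℝ) : Set (ℝ × ℝ) := {x | x.1 ^ 2 / a ^ 2 + x.2 ^ 2 / b ^ 2 ≤ 1}

def ALog (Ω : ℝ → ℝ) (a b : ℝ) : ℝ :=
  ∫ φ in (-π)..π,
    (a ^ 2 * Real.cos φ ^ 2 + b ^ 2 * Real.sin φ ^ 2)⁻¹ * Real.cos φ ^ 2 * OmtLog Ω φ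

def BLog (Ω : ℝ → ℝ) (a b : ℝ) : ℝ :=
  ∫ φ in (-π)..π,
    (a ^ 2 * Real.cos φ ^ 2 + b ^ 2 * Real.sin φ ^ 2)⁻¹ * Real.sin φ ^ 2 * OmtLog Ω φ

def DLog (Ω : ℝ → ℝ) (a b : ℝ) : ℝ :=
  ∫ φ in (-π)..π,
    (a ^ 2 * Real.cos φ ^ 2 + b ^ 2 * Real.sin φ ^ 2)⁻¹ *
      (Real.cos φ * Real.sin φ) * OmtLog Ω φ

/-- The uniform probability measure on the rotated ellipse `B(0; a, b, η)`. -/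
def unifEllipse (a b η : ℝ) : Measure (ℝ × ℝ) :=
  volume.withDensity ((Rot η '' ellipseSet a b).indicator fun _ => ENNReal.ofReal ((π * a * b)⁻¹))

/-- The pushforward of the density `(2/(πb²)) (b² - t²)₊^{1/2} dt` under `t ↦ R_η (0, t)`. -/
def semicirc (b η : ℝ) : Measure (ℝ × ℝ) :=
  Measure.map (fun t : ℝ => Rot η (0, t))
    (volume.withDensity fun t =>
      ENNReal.ofReal (2 / (π * b ^ 2) * (max (b ^ 2 - t ^ 2) 0) ^ ((1 : ℝ) / 2)))

/-- The vertical semicircle measure `ρ_{1D}` for the logarithmic case. -/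
def rho1Dlog : Measure (ℝ × ℝ) :=
  Measure.map (fun t : ℝ => ((0 : ℝ), t))
    (volume.withDensity fun t => ENNReal.ofReal (2 / π * (max (1 - t ^ 2) 0) ^ ((1 : ℝ) / 2)))

/-- The measure `ψ(t) dt` placed on the vertical axis. -/
def rhoPsi (ψ : ℝ → ℝ) : Measure (ℝ × ℝ) :=
  Measure.map (fun t : ℝ => ((0 : ℝ), t)) (volume.withDensity fun t => ENNReal.ofReal (ψ t))


/-! ### Second differences of the angle function -/

/-- The symmetric second difference `Ω(ψ+t) + Ω(ψ-t) - 2Ω(ψ)`. -/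
def sd (Ω : ℝ → ℝ) (ψ t : ℝ) : ℝ := Ω (ψ + t) + Ω (ψ - t) - 2 * Ω ψ

/-- The second difference divided by `sin² t`; it is bounded on `[0, π]` (with junk value `0` at
the endpoints). -/
def quo (Ω : ℝ → ℝ) (ψ t : ℝ) : ℝ := sd Ω ψ t / Real.sin t ^ 2

/-- The regularized form of the hypersingular integral `pv ∫ (Ω(θ) - Ω(ψ)) / sin²(θ - ψ) dθ`. -/
def hyp (Ω : ℝ → ℝ) (ψ : ℝ) : ℝ := ∫ t in (0 : ℝ)..π, quo Ω ψ t

lemma exists_bound_of_periodic {f : ℝ → ℝ} (hf : Continuous f) (hp : Function.Periodic f π) :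
    ∃ C, 0 ≤ C ∧ ∀ x, |f x| ≤ C := by
  obtain ⟨C, hC⟩ := (hp.isBounded_of_continuous Real.pi_ne_zero hf).exists_norm_le
  exact ⟨C, (norm_nonneg _).trans (hC (f 0) (mem_range_self 0)), fun x => hC _ (mem_range_self x)⟩

lemma periodic_deriv {f : ℝ → ℝ} (hp : Function.Periodic f π) :
    Function.Periodic (deriv f) π := by
  intro x
  rw [← deriv_comp_add_const]
  congr 1
  exact funext hp

lemma SatisfiesH.continuous {Ω : ℝ → ℝ} (hΩ : SatisfiesH Ω) : Continuous Ω := hΩ.1.continuous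

lemma SatisfiesH.periodic {Ω : ℝ → ℝ} (hΩ : SatisfiesH Ω) : Function.Periodic Ω π := hΩ.2.2.2

lemma SatisfiesH.contDiff_deriv {Ω : ℝ → ℝ} (hΩ : SatisfiesH Ω) :
    ContDiff ℝ (⊤ : ℕ∞) (deriv Ω) := by
  have h : ContDiff ℝ ((⊤ : ℕ∞) + 1) Ω := hΩ.1
  exact (contDiff_succ_iff_deriv.1 h).2.2

lemma two_div_pi_mul_le {t : ℝ} (h0 : 0 ≤ t) (h1 : t ≤ π / 2) : t ≤ π / 2 * Real.sin t := by
  have h := Real.mul_le_sin h0 h1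
  have hp := Real.pi_pos
  calc t = π / 2 * (2 / π * t) := by field_simp
    _ ≤ _ := by gcongr

lemma sd_pi_sub {Ω : ℝ → ℝ} (hp : Function.Periodic Ω π) (ψ t : ℝ) :
    sd Ω ψ (π - t) = sd Ω ψ t := by
  have h1 : Ω (ψ + (π - t)) = Ω (ψ - t) := by
    rw [show ψ + (π - t) = ψ - t + π by ring]; exact hp _
  have h2 : Ω (ψ - (π - t)) = Ω (ψ + t) := by
    rw [show ψ - (π - t) = ψ + t - π by ring]; exact hp.sub_eq _
  rw [sd, sd, h1, h2]; ring

/-- A mean value estimate gives `|sd| ≤ M t²`, and `t ≤ (π/2) sin t` on `[0, π/2]`; the other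
half of `[0, π]` follows by the reflection `t ↦ π - t`. -/
lemma exists_sd_bound {Ω : ℝ → ℝ} (hΩ : SatisfiesH Ω) :
    ∃ C, 0 ≤ C ∧ ∀ ψ, ∀ t ∈ Icc 0 π, |sd Ω ψ t| ≤ C * Real.sin t ^ 2 := by
  have hd := hΩ.contDiff_deriv
  have hd0 : Differentiable ℝ Ω := hΩ.1.differentiable (by simp)
  have hd1 : Differentiable ℝ (deriv Ω) := hd.differentiable (by simp)
  obtain ⟨M, hM0, hM⟩ := exists_bound_of_periodic (hd.continuous_deriv (by simp))
    (periodic_deriv (periodic_deriv hΩ.periodic))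
  have hlip : ∀ x y, |deriv Ω y - deriv Ω x| ≤ M * |y - x| := fun x y =>
    Convex.norm_image_sub_le_of_norm_deriv_le (s := univ) (fun x _ => hd1 x) (fun x _ => hM x)
      convex_univ (mem_univ x) (mem_univ y)
  have key : ∀ ψ, ∀ t ∈ Icc 0 (π / 2), |sd Ω ψ t| ≤ M * t ^ 2 := by
    intro ψ
    have hder : ∀ t, HasDerivAt (sd Ω ψ) (deriv Ω (ψ + t) - deriv Ω (ψ - t)) t := by
      intro t
      have h1 := ((hd0 (ψ + t)).hasDerivAt).comp_const_add ψ t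
      have h2 := ((hd0 (ψ - t)).hasDerivAt).comp_const_sub ψ t
      have h3 := (h1.add h2).sub_const (2 * Ω ψ)
      rw [← sub_eq_add_neg] at h3
      exact h3
    refine image_norm_le_of_norm_deriv_right_le_deriv_boundary (B := fun t => M * t ^ 2)
      (B' := fun t => M * (2 * t)) (f' := fun t => deriv Ω (ψ + t) - deriv Ω (ψ - t))
      (fun t _ => (hder t).continuousAt.continuousWithinAt)
      (fun t _ => (hder t).hasDerivWithinAt) ?_ ?_ ?_
    · simp [sd, two_mul]
    · intro x
      simpa using! (hasDerivAt_pow 2 x).const_mul M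
    · intro x hx
      refine (hlip (ψ - x) (ψ + x)).trans ?_
      rw [show ψ + x - (ψ - x) = 2 * x by ring, abs_of_nonneg (by linarith [hx.1])]
  have key2 : ∀ ψ, ∀ t ∈ Icc 0 (π / 2), |sd Ω ψ t| ≤ M * (π / 2) ^ 2 * Real.sin t ^ 2 := by
    intro ψ t ht
    refine (key ψ t ht).trans ?_
    rw [mul_assoc, ← mul_pow]
    have := two_div_pi_mul_le ht.1 ht.2
    have := ht.1
    gcongr
  refine ⟨M * (π / 2) ^ 2, by positivity, fun ψ t ht => ?_⟩
  rcases le_total t (π / 2) with h | h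
  · exact key2 ψ t ⟨ht.1, h⟩
  · have := key2 ψ (π - t) ⟨by linarith [ht.2], by linarith⟩
    rwa [sd_pi_sub hΩ.periodic, Real.sin_pi_sub] at this

lemma exists_quo_bound {Ω : ℝ → ℝ} (hΩ : SatisfiesH Ω) :
    ∃ C, 0 ≤ C ∧ ∀ ψ, ∀ t ∈ Icc 0 π, |quo Ω ψ t| ≤ C := by
  obtain ⟨C, hC, h⟩ := exists_sd_bound hΩ
  refine ⟨C, hC, fun ψ t ht => ?_⟩
  rw [quo, abs_div, abs_of_nonneg (sq_nonneg (Real.sin t))]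
  exact div_le_of_le_mul₀ (sq_nonneg _) hC (h ψ t ht)

/-- First differences are `O(sin t)` on `[0, π]`, again by reflection. -/
lemma exists_fd_bound {Ω : ℝ → ℝ} (hΩ : SatisfiesH Ω) :
    ∃ C, 0 ≤ C ∧ ∀ ψ, ∀ t ∈ Icc 0 π, |Ω (ψ + t) - Ω ψ| ≤ C * Real.sin t := by
  have hd0 : Differentiable ℝ Ω := hΩ.1.differentiable (by simp)
  obtain ⟨M, hM0, hM⟩ := exists_bound_of_periodic hΩ.contDiff_deriv.continuous
    (periodic_deriv hΩ.periodic)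
  have hlip : ∀ x y, |Ω y - Ω x| ≤ M * |y - x| := fun x y =>
    Convex.norm_image_sub_le_of_norm_deriv_le (s := univ) (fun x _ => hd0 x) (fun x _ => hM x)
      convex_univ (mem_univ x) (mem_univ y)
  refine ⟨M * (π / 2), by positivity, fun ψ t ht => ?_⟩
  rcases le_total t (π / 2) with h | h
  · refine (hlip _ _).trans ?_
    rw [add_sub_cancel_left, abs_of_nonneg ht.1, mul_assoc]
    exact mul_le_mul_of_nonneg_left (two_div_pi_mul_le ht.1 h) hM0
  · have h1 : Ω (ψ + t) = Ω (ψ - (π - t)) := by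
      rw [show ψ + t = ψ - (π - t) + π by ring]; exact hΩ.periodic _
    rw [h1]
    refine (hlip _ _).trans ?_
    have h0 : 0 ≤ π - t := by linarith [ht.2]
    rw [show ψ - (π - t) - ψ = -(π - t) by ring, abs_neg, abs_of_nonneg h0, mul_assoc,
      ← Real.sin_pi_sub t]
    exact mul_le_mul_of_nonneg_left (two_div_pi_mul_le h0 (by linarith)) hM0

lemma measurable_quo {Ω : ℝ → ℝ} (hΩ : Continuous Ω) :
    Measurable (fun p : ℝ × ℝ => quo Ω p.1 p.2) := by
  unfold quo sd
  refine Measurable.div ?_ ?_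
  · exact Continuous.measurable (by fun_prop)
  · exact Continuous.measurable (by fun_prop)

lemma measurable_quo_right {Ω : ℝ → ℝ} (hΩ : Continuous Ω) (ψ : ℝ) : Measurable (quo Ω ψ) :=
  (measurable_quo hΩ).comp (measurable_const.prodMk measurable_id)

lemma uIoc_subset_Icc_zero_pi {t : ℝ} (ht : t ∈ Set.uIoc 0 π) : t ∈ Icc 0 π := by
  rw [uIoc_of_le Real.pi_pos.le] at ht
  exact Ioc_subset_Icc_self ht

lemma continuous_hyp {Ω : ℝ → ℝ} (hΩ : SatisfiesH Ω) : Continuous (hyp Ω) := by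
  obtain ⟨C, hC, h⟩ := exists_quo_bound hΩ
  have hc := hΩ.continuous
  refine intervalIntegral.continuous_of_dominated_interval (bound := fun _ => C)
    (fun ψ => (measurable_quo_right hc ψ).aestronglyMeasurable)
    (fun ψ => Eventually.of_forall fun t ht => h ψ t (uIoc_subset_Icc_zero_pi ht))
    (by simp) (Eventually.of_forall fun t _ => ?_)
  unfold quo sd
  fun_prop

lemma periodic_hyp {Ω : ℝ → ℝ} (hp : Function.Periodic Ω π) : Function.Periodic (hyp Ω) π := by
  intro ψ
  unfold hyp quo sd
  refine intervalIntegral.integral_congr fun t _ => ?_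
  have h1 : Ω (ψ + π + t) = Ω (ψ + t) := by rw [add_right_comm]; exact hp _
  have h2 : Ω (ψ + π - t) = Ω (ψ - t) := by rw [← sub_add_eq_add_sub]; exact hp _
  simp only [h1, h2, hp ψ]

/-! ### Reduction of integrals over `[-π, π]` to `[0, π]` -/

lemma integral_two_periods {g : ℝ → ℝ} (hg : Function.Periodic g π) (a : ℝ)
    (hi : IntervalIntegrable (fun t => g (a + t)) volume 0 π) :
    ∫ x in (-π)..π, g x = 2 * ∫ t in (0 : ℝ)..π, g (a + t) := by
  have hp : Function.Periodic (fun t => g (a + t)) π := by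
    intro t
    simp only [← add_assoc]
    exact hg _
  have hI : ∀ x y, IntervalIntegrable g volume x y := by
    intro x y
    have h := hp.intervalIntegrable Real.pi_ne_zero (t := 0) (by simpa using hi) (x - a) (y - a)
    have h2 := h.comp_add_left (-a)
    simpa using h2
  have e1 : ∫ x in (-π)..0, g x = ∫ t in (0 : ℝ)..π, g (a + t) := by
    rw [intervalIntegral.integral_comp_add_left, add_zero]
    have := hg.intervalIntegral_add_eq (-π) a
    simpa using this
  have e2 : ∫ x in (0 : ℝ)..π, g x = ∫ t in (0 : ℝ)..π, g (a + t) := by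
    rw [intervalIntegral.integral_comp_add_left, add_zero]
    have := hg.intervalIntegral_add_eq 0 a
    simpa using this
  rw [← intervalIntegral.integral_add_adjacent_intervals (hI (-π) 0) (hI 0 π), e1, e2]
  ring

lemma abs_cos_add_pi (φ θ : ℝ) : |Real.cos (φ - (θ + π))| = |Real.cos (φ - θ)| := by
  rw [show φ - (θ + π) = φ - θ - π by ring, Real.cos_sub_pi, abs_neg]

lemma abs_cos_shift (φ t : ℝ) : |Real.cos (φ - (φ + π / 2 + t))| = |Real.sin t| := by
  rw [show φ - (φ + π / 2 + t) = -(t + π / 2) by ring, Real.cos_neg, Real.cos_add_pi_div_two,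
    abs_neg]

lemma abs_sin_of_mem {t : ℝ} (ht : t ∈ uIcc 0 π) : |Real.sin t| = Real.sin t := by
  rw [uIcc_of_le Real.pi_pos.le] at ht
  exact abs_of_nonneg (Real.sin_nonneg_of_mem_Icc ht)

/-- Integrals of first differences against a weight depending only on `|cos(φ - θ)|` become
integrals of second differences, since the weight is invariant under `t ↦ π - t`. -/
lemma integral_weight_eq {Ω : ℝ → ℝ} (hp : Function.Periodic Ω π) (w : ℝ → ℝ) (φ : ℝ)
    (hi : IntervalIntegrable
      (fun t => w (Real.sin t) * (Ω (φ + π / 2 + t) - Ω (φ + π / 2))) volume 0 π) :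
    ∫ θ in (-π)..π, w |Real.cos (φ - θ)| * (Ω θ - Ω (φ + π / 2)) =
      ∫ t in (0 : ℝ)..π, w (Real.sin t) * sd Ω (φ + π / 2) t := by
  have hi' : IntervalIntegrable
      (fun t => w |Real.cos (φ - (φ + π / 2 + t))| * (Ω (φ + π / 2 + t) - Ω (φ + π / 2)))
      volume 0 π := by
    refine hi.congr fun t ht => ?_
    rw [abs_cos_shift, abs_sin_of_mem (uIoc_subset_uIcc ht)]
  rw [integral_two_periods (g := fun θ => w |Real.cos (φ - θ)| * (Ω θ - Ω (φ + π / 2)))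
    ?_ (φ + π / 2) hi']
  swap
  · intro θ
    beta_reduce
    rw [abs_cos_add_pi, hp θ]
  have e1 : ∫ t in (0 : ℝ)..π,
      w |Real.cos (φ - (φ + π / 2 + t))| * (Ω (φ + π / 2 + t) - Ω (φ + π / 2)) =
      ∫ t in (0 : ℝ)..π, w (Real.sin t) * (Ω (φ + π / 2 + t) - Ω (φ + π / 2)) := by
    refine intervalIntegral.integral_congr fun t ht => ?_
    rw [abs_cos_shift, abs_sin_of_mem ht]
  have hr : ∀ t, w (Real.sin (π - t)) * (Ω (φ + π / 2 + (π - t)) - Ω (φ + π / 2)) =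
      w (Real.sin t) * (Ω (φ + π / 2 - t) - Ω (φ + π / 2)) := by
    intro t
    rw [Real.sin_pi_sub, show φ + π / 2 + (π - t) = φ + π / 2 - t + π by ring, hp]
  have e2 : ∫ t in (0 : ℝ)..π, w (Real.sin t) * (Ω (φ + π / 2 + t) - Ω (φ + π / 2)) =
      ∫ t in (0 : ℝ)..π, w (Real.sin t) * (Ω (φ + π / 2 - t) - Ω (φ + π / 2)) := by
    have h := intervalIntegral.integral_comp_sub_left (a := 0) (b := π)
      (fun t => w (Real.sin t) * (Ω (φ + π / 2 + t) - Ω (φ + π / 2))) π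
    simp only [hr, sub_self, sub_zero] at h
    exact h.symm
  have hi2 : IntervalIntegrable
      (fun t => w (Real.sin t) * (Ω (φ + π / 2 - t) - Ω (φ + π / 2))) volume 0 π := by
    have h := (hi.comp_sub_left π).symm
    simpa only [hr, sub_self, sub_zero] using h
  rw [e1, two_mul]
  nth_rewrite 2 [e2]
  rw [← intervalIntegral.integral_add hi hi2]
  refine intervalIntegral.integral_congr fun t _ => ?_
  simp only [sd]
  ring

/-! ### Convergence of the potentials -/

lemma continuous_nrm : Continuous nrm := by
  unfold nrm
  fun_prop

lemma nrm_pos {x : ℝ × ℝ} (hx : x ≠ 0) : 0 < nrm x := by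
  refine Real.sqrt_pos.2 ?_
  have h : x.1 ≠ 0 ∨ x.2 ≠ 0 := by
    by_contra! h
    exact hx (Prod.ext h.1 h.2)
  rcases h with h | h <;> positivity

lemma tendsto_const_mul_zero (C : ℝ) : Tendsto (fun s : ℝ => s * C) (𝓝[>] 0) (𝓝 0) := by
  have h : Tendsto (fun s : ℝ => s * C) (𝓝 0) (𝓝 (0 * C)) :=
    (continuous_id.mul continuous_const).tendsto 0
  rw [zero_mul] at h
  exact h.mono_left nhdsWithin_le_nhds

/-- With `Λ` a bound for `ln |x|` in absolute value on `K`, the expansion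
`|x|^{-s} = 1 - s ln|x| + O(s²Λ²)` gives the uniform rate `O(s)`. -/
lemma tendstoUniformlyOn_Wsfam {Ω : ℝ → ℝ} (hΩ : SatisfiesH Ω) {K : Set (ℝ × ℝ)}
    (hK : IsCompact K) (h0 : (0 : ℝ × ℝ) ∉ K) :
    TendstoUniformlyOn (fun s x => Wsfam s Ω x) (Wlog Ω) (𝓝[>] (0 : ℝ)) K := by
  have hne : ∀ x ∈ K, 0 < nrm x := fun x hx => nrm_pos fun h => h0 (h ▸ hx)
  obtain ⟨Λ₀, hΛ₀⟩ := hK.exists_bound_of_continuousOn (f := fun x => Real.log (nrm x))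
    (continuous_nrm.continuousOn.log fun x hx => (hne x hx).ne')
  obtain ⟨M, hM0, hM⟩ := exists_bound_of_periodic hΩ.continuous hΩ.periodic
  set Λ := max Λ₀ 0 with hΛdef
  have hΛ0 : 0 ≤ Λ := le_max_right _ _
  have hΛ : ∀ x ∈ K, |Real.log (nrm x)| ≤ Λ := fun x hx => (hΛ₀ x hx).trans (le_max_left _ _)
  rw [Metric.tendstoUniformlyOn_iff]
  intro ε hε
  have hs1 : ∀ᶠ s : ℝ in 𝓝[>] 0, s * Λ < 1 :=
    (tendsto_const_mul_zero Λ).eventually (gt_mem_nhds one_pos)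
  have hs2 : ∀ᶠ s : ℝ in 𝓝[>] 0, s * (Λ ^ 2 + 2 * Λ * M) < ε :=
    (tendsto_const_mul_zero _).eventually (gt_mem_nhds hε)
  filter_upwards [hs1, hs2, self_mem_nhdsWithin] with s h1 h2 hs x hx
  have hs : 0 < s := hs
  set l := Real.log (nrm x) with hl
  have hy : |-(s * l)| ≤ s * Λ := by
    rw [abs_neg, abs_mul, abs_of_pos hs]
    exact mul_le_mul_of_nonneg_left (hΛ x hx) hs.le
  have hpow : nrm x ^ (-s) = Real.exp (-(s * l)) := by
    rw [Real.rpow_def_of_pos (hne x hx)]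
    congr 1
    ring
  have b1 := Real.abs_exp_sub_one_sub_id_le (hy.trans h1.le)
  have b2 := (Real.abs_exp_sub_one_le (hy.trans h1.le)).trans
    (mul_le_mul_of_nonneg_left hy zero_le_two)
  have b1' : |Real.exp (-(s * l)) - 1 - -(s * l)| ≤ (s * Λ) ^ 2 := by
    refine b1.trans ?_
    rw [← sq_abs]
    gcongr
  rw [dist_comm, Real.dist_eq]
  have e : Wsfam s Ω x - Wlog Ω x = (Real.exp (-(s * l)) - 1 - -(s * l)) / s +
      (Real.exp (-(s * l)) - 1) * Ω (ang x) := by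
    rw [Wsfam, Wlog, hpow, ← hl]
    field_simp
    ring
  rw [e]
  calc _ ≤ |(Real.exp (-(s * l)) - 1 - -(s * l)) / s| +
      |(Real.exp (-(s * l)) - 1) * Ω (ang x)| := abs_add_le _ _
    _ ≤ (s * Λ) ^ 2 / s + 2 * (s * Λ) * M := by
      rw [abs_div, abs_mul, abs_of_pos hs]
      gcongr
      exact hM _
    _ = s * (Λ ^ 2 + 2 * Λ * M) := by field_simp
    _ < ε := h2

/-! ### Convergence of the transformed angle functions -/

/-- The value of the principal value limit `Ω̃_log`, written with the regularized integral. -/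
def omtLim (Ω : ℝ → ℝ) (φ : ℝ) : ℝ :=
  -((2 * π) ^ (-(2 : ℝ))) * hyp Ω (φ + π / 2) + (2 * π)⁻¹

lemma tendsto_tauC :
    Tendsto (fun s => tauC (2 - s)) (𝓝[>] 0) (𝓝 (-((2 * π) ^ (-(2 : ℝ))))) := by
  have hG : ContinuousAt Real.Gamma (2 - 0) := by
    refine (Real.differentiableAt_Gamma fun m => ?_).continuousAt
    have : (0 : ℝ) ≤ m := Nat.cast_nonneg m
    linarith
  have hp : (2 * π) ≠ 0 := by positivity
  have h : ContinuousAt (fun s : ℝ => tauC (2 - s)) 0 := by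
    unfold tauC
    refine ContinuousAt.mul (ContinuousAt.mul ?_ ?_) ?_
    · exact ContinuousAt.rpow (by fun_prop) (by fun_prop) (Or.inl hp)
    · exact ContinuousAt.comp (f := fun s : ℝ => 2 - s) hG (by fun_prop)
    · fun_prop
  have h2 := h.tendsto.mono_left (nhdsWithin_le_nhds (s := Ioi 0))
  have e : tauC (2 - 0) = -((2 * π) ^ (-(2 : ℝ))) := by
    rw [tauC, sub_zero, Real.Gamma_two, mul_div_cancel_left₀ _ two_ne_zero, Real.cos_pi]
    ring
  rwa [e] at h2

/-- The recursion `Γ(s/2 + 1) = (s/2) Γ(s/2)` removes the singularity of `c_s / s` at `0`. -/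
lemma tendsto_cC_div :
    Tendsto (fun s => cC s * (1 / s)) (𝓝[>] 0) (𝓝 (2 * π)⁻¹) := by
  have hG : ∀ x : ℝ, 0 < x → ContinuousAt Real.Gamma x := by
    intro x hx
    refine (Real.differentiableAt_Gamma fun m => ?_).continuousAt
    have : (0 : ℝ) ≤ m := Nat.cast_nonneg m
    linarith
  have h : ContinuousAt
      (fun s : ℝ => π ^ (s - 1) * Real.Gamma ((2 - s) / 2) / (2 * Real.Gamma (s / 2 + 1))) 0 := by
    refine ContinuousAt.div (ContinuousAt.mul ?_ ?_) (ContinuousAt.mul continuousAt_const ?_) ?_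
    · exact ContinuousAt.rpow (by fun_prop) (by fun_prop) (Or.inl Real.pi_ne_zero)
    · exact ContinuousAt.comp (f := fun s : ℝ => (2 - s) / 2) (hG _ (by norm_num)) (by fun_prop)
    · exact ContinuousAt.comp (f := fun s : ℝ => s / 2 + 1) (hG _ (by norm_num)) (by fun_prop)
    · simp
  have h2 := h.tendsto.mono_left (nhdsWithin_le_nhds (s := Ioi 0))
  have e : π ^ ((0 : ℝ) - 1) * Real.Gamma ((2 - 0) / 2) / (2 * Real.Gamma (0 / 2 + 1)) =
      (2 * π)⁻¹ := by
    rw [zero_sub, Real.rpow_neg_one]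
    norm_num
    ring
  rw [e] at h2
  refine h2.congr' ?_
  filter_upwards [self_mem_nhdsWithin] with s hs
  have hs : 0 < s := hs
  have hg : Real.Gamma (s / 2) ≠ 0 := (Real.Gamma_pos_of_pos (by positivity)).ne'
  rw [Real.Gamma_add_one (by positivity), cC]
  field_simp

lemma tendsto_cC : Tendsto cC (𝓝[>] 0) (𝓝 0) := by
  have h : Tendsto (fun s : ℝ => s * (cC s * (1 / s))) (𝓝[>] 0) (𝓝 (0 * (2 * π)⁻¹)) :=
    (tendsto_id.mono_left nhdsWithin_le_nhds).mul tendsto_cC_div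
  rw [zero_mul] at h
  refine h.congr' ?_
  filter_upwards [self_mem_nhdsWithin] with s hs
  have hs : s ≠ 0 := (mem_Ioi.1 hs).ne'
  field_simp

lemma intervalIntegrable_sin_rpow {s : ℝ} (h0 : 0 < s) (h1 : s < 1) :
    IntervalIntegrable (fun t => Real.sin t ^ (s - 1)) volume 0 π := by
  have i1 : IntervalIntegrable (fun t : ℝ => t ^ (s - 1)) volume 0 π :=
    intervalIntegral.intervalIntegrable_rpow' (by linarith)
  have i2 : IntervalIntegrable (fun t : ℝ => (π - t) ^ (s - 1)) volume 0 π := by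
    simpa using (i1.comp_sub_left π).symm
  refine ((i1.add i2).const_mul ((2 / π) ^ (s - 1))).mono_fun'
    (Real.measurable_sin.pow_const _).aestronglyMeasurable ?_
  refine (ae_restrict_iff' measurableSet_uIoc).2 (Eventually.of_forall fun t ht => ?_)
  have ht := uIoc_subset_Icc_zero_pi ht
  have hs0 := Real.sin_nonneg_of_mem_Icc ht
  have hp := Real.pi_pos
  have key : ∀ u, 0 < u → u ≤ π / 2 →
      Real.sin u ^ (s - 1) ≤ (2 / π) ^ (s - 1) * u ^ (s - 1) := by
    intro u hu hu'
    rw [← Real.mul_rpow (by positivity) hu.le]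
    exact Real.rpow_le_rpow_of_nonpos (by positivity) (Real.mul_le_sin hu.le hu') (by linarith)
  have n1 : 0 ≤ t ^ (s - 1) := Real.rpow_nonneg ht.1 _
  have n2 : 0 ≤ (π - t) ^ (s - 1) := Real.rpow_nonneg (by linarith [ht.2]) _
  have n3 : 0 ≤ (2 / π) ^ (s - 1) := by positivity
  beta_reduce
  rw [Real.norm_of_nonneg (Real.rpow_nonneg hs0 _), mul_add]
  rcases hs0.eq_or_lt with hz | hpos
  · rw [← hz, Real.zero_rpow (by linarith)]
    positivity
  rcases le_total t (π / 2) with h | h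
  · have : 0 < t := by
      rcases ht.1.eq_or_lt with h' | h'
      · rw [← h', Real.sin_zero] at hpos
        exact absurd hpos (lt_irrefl _)
      · exact h'
    nlinarith [key t this h, mul_nonneg n3 n2]
  · have : 0 < π - t := by
      rcases ht.2.eq_or_lt with h' | h'
      · rw [h', Real.sin_pi] at hpos
        exact absurd hpos (lt_irrefl _)
      · linarith
    have k := key (π - t) this (by linarith)
    rw [Real.sin_pi_sub] at k
    nlinarith [k, mul_nonneg n3 n1]

lemma rpow_mul_sd (Ω : ℝ → ℝ) {s t : ℝ} (ht : t ∈ Icc 0 π) (h1 : s < 1) (ψ : ℝ) :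
    Real.sin t ^ (-2 + s) * sd Ω ψ t = Real.sin t ^ s * quo Ω ψ t := by
  rcases (Real.sin_nonneg_of_mem_Icc ht).eq_or_lt with hz | hpos
  · rw [quo, ← hz, Real.zero_rpow (by linarith)]
    simp
  · rw [quo, add_comm, Real.rpow_add hpos, Real.rpow_neg hpos.le, Real.rpow_two]
    ring

lemma integral_omts_eq {Ω : ℝ → ℝ} (hΩ : SatisfiesH Ω) {s : ℝ} (h0 : 0 < s) (h1 : s < 1)
    (φ : ℝ) :
    ∫ θ in (-π)..π, |Real.cos (φ - θ)| ^ (-2 + s) * (Ω θ - Ω (φ + π / 2)) =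
      ∫ t in (0 : ℝ)..π, Real.sin t ^ s * quo Ω (φ + π / 2) t := by
  have hc := hΩ.continuous
  rw [integral_weight_eq hΩ.periodic (fun x => x ^ (-2 + s)) φ]
  · refine intervalIntegral.integral_congr fun t ht => ?_
    rw [uIcc_of_le Real.pi_pos.le] at ht
    exact rpow_mul_sd Ω ht h1 _
  · obtain ⟨C, hC, h⟩ := exists_fd_bound hΩ
    refine ((intervalIntegrable_sin_rpow h0 h1).const_mul C).mono_fun' ?_ ?_
    · refine (Measurable.mul (Real.measurable_sin.pow_const _) ?_).aestronglyMeasurable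
      exact Continuous.measurable (by fun_prop)
    · refine (ae_restrict_iff' measurableSet_uIoc).2 (Eventually.of_forall fun t ht => ?_)
      have ht := uIoc_subset_Icc_zero_pi ht
      have hs0 := Real.sin_nonneg_of_mem_Icc ht
      beta_reduce
      rw [norm_mul, Real.norm_of_nonneg (Real.rpow_nonneg hs0 _), Real.norm_eq_abs]
      refine (mul_le_mul_of_nonneg_left (h _ t ht) (Real.rpow_nonneg hs0 _)).trans_eq ?_
      rcases hs0.eq_or_lt with hz | hpos
      · rw [← hz, Real.zero_rpow (by linarith), Real.zero_rpow (by linarith)]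
        simp
      · rw [show s - 1 = (-2 + s) + 1 by ring, Real.rpow_add_one hpos.ne']
        ring

lemma intervalIntegrable_quo_mul {Ω : ℝ → ℝ} (hΩ : SatisfiesH Ω) {w : ℝ → ℝ} (hw : Measurable w)
    (h1 : ∀ t ∈ Icc 0 π, |w t| ≤ 1) (ψ : ℝ) :
    IntervalIntegrable (fun t => w t * quo Ω ψ t) volume 0 π := by
  obtain ⟨C, hC, h⟩ := exists_quo_bound hΩ
  refine (intervalIntegrable_const (c := C)).mono_fun'
    (hw.mul (measurable_quo_right hΩ.continuous ψ)).aestronglyMeasurable ?_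
  refine (ae_restrict_iff' measurableSet_uIoc).2 (Eventually.of_forall fun t ht => ?_)
  have ht := uIoc_subset_Icc_zero_pi ht
  beta_reduce
  rw [Real.norm_eq_abs, abs_mul, ← one_mul C]
  exact mul_le_mul (h1 t ht) (h ψ t ht) (abs_nonneg _) zero_le_one

lemma sin_rpow_mem {s t : ℝ} (hs : 0 ≤ s) (ht : t ∈ Icc 0 π) :
    0 ≤ Real.sin t ^ s ∧ Real.sin t ^ s ≤ 1 :=
  ⟨Real.rpow_nonneg (Real.sin_nonneg_of_mem_Icc ht) _,
    Real.rpow_le_one (Real.sin_nonneg_of_mem_Icc ht) (Real.sin_le_one t) hs⟩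

lemma ae_sin_pos : ∀ᵐ t : ℝ, t ∈ Set.uIoc 0 π → 0 < Real.sin t := by
  filter_upwards [Measure.ae_ne volume π] with t ht hm
  rw [uIoc_of_le Real.pi_pos.le] at hm
  exact Real.sin_pos_of_pos_of_lt_pi hm.1 (lt_of_le_of_ne hm.2 ht)

lemma tendsto_integral_one_sub_sin_rpow :
    Tendsto (fun s : ℝ => ∫ t in (0 : ℝ)..π, (1 - Real.sin t ^ s)) (𝓝[>] 0) (𝓝 0) := by
  have h := intervalIntegral.tendsto_integral_filter_of_dominated_convergence
    (a := 0) (b := π) (μ := volume) (l := 𝓝[>] (0 : ℝ)) (f := fun _ => (0 : ℝ))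
    (F := fun s t => 1 - Real.sin t ^ s) (fun _ => 1) ?_ ?_ (by simp) ?_
  · simpa using h
  · exact Eventually.of_forall fun s =>
      (measurable_const.sub (Real.measurable_sin.pow_const _)).aestronglyMeasurable
  · filter_upwards [self_mem_nhdsWithin] with s hs
    refine Eventually.of_forall fun t ht => ?_
    obtain ⟨h0, h1⟩ := sin_rpow_mem (le_of_lt hs) (uIoc_subset_Icc_zero_pi ht)
    rw [Real.norm_eq_abs, abs_of_nonneg (by linarith)]
    linarith
  · filter_upwards [ae_sin_pos] with t ht hm
    have hc : ContinuousAt (fun s : ℝ => 1 - Real.sin t ^ s) 0 :=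
      continuousAt_const.sub (Real.continuousAt_const_rpow (ht hm).ne')
    have := hc.tendsto.mono_left (nhdsWithin_le_nhds (s := Ioi 0))
    simpa using this

/-- The error is bounded by a quantity independent of `φ`, because `quo` is bounded uniformly in
`ψ` and the kernels differ by `∫ (1 - sin^s)`. -/
lemma tendstoUniformly_Omts {Ω : ℝ → ℝ} (hΩ : SatisfiesH Ω) :
    TendstoUniformly (fun s φ => Omts s Ω φ) (omtLim Ω) (𝓝[>] (0 : ℝ)) := by
  obtain ⟨C, hC, h⟩ := exists_quo_bound hΩ
  obtain ⟨M, hM0, hM⟩ := exists_bound_of_periodic hΩ.continuous hΩ.periodic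
  set τ₀ : ℝ := -((2 * π) ^ (-(2 : ℝ))) with hτ
  have hb : Tendsto (fun s : ℝ => |tauC (2 - s) - τ₀| * (C * π) +
      |τ₀| * (C * ∫ t in (0 : ℝ)..π, (1 - Real.sin t ^ s)) +
      |cC s * (1 / s) - (2 * π)⁻¹| + |cC s| * M) (𝓝[>] 0) (𝓝 0) := by
    have t1 := ((tendsto_tauC.sub_const τ₀).abs).mul_const (C * π)
    have t2 := (tendsto_integral_one_sub_sin_rpow.const_mul C).const_mul |τ₀|
    have t3 := (tendsto_cC_div.sub_const (2 * π)⁻¹).abs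
    have t4 := tendsto_cC.abs.mul_const M
    simpa [hτ] using ((t1.add t2).add t3).add t4
  rw [Metric.tendstoUniformly_iff]
  intro ε hε
  filter_upwards [hb.eventually (gt_mem_nhds hε), self_mem_nhdsWithin,
    nhdsWithin_le_nhds (gt_mem_nhds (zero_lt_one' ℝ))] with s hs h0 h1 φ
  have h0 : 0 < s := h0
  set ψ := φ + π / 2 with hψ
  set I := ∫ t in (0 : ℝ)..π, Real.sin t ^ s * quo Ω ψ t with hI
  have hbI : |I| ≤ C * π := by
    have := intervalIntegral.norm_integral_le_of_norm_le_const (a := 0) (b := π) (C := C)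
      (f := fun t => Real.sin t ^ s * quo Ω ψ t) fun t ht => by
        have ht := uIoc_subset_Icc_zero_pi ht
        obtain ⟨p0, p1⟩ := sin_rpow_mem h0.le ht
        rw [norm_mul, Real.norm_of_nonneg p0, ← one_mul C]
        exact mul_le_mul p1 (h ψ t ht) (abs_nonneg _) zero_le_one
    simpa [abs_of_pos Real.pi_pos] using this
  have hi1 := intervalIntegrable_quo_mul hΩ (w := fun t => Real.sin t ^ s)
    (Real.measurable_sin.pow_const _) (fun t ht => by
      obtain ⟨p0, p1⟩ := sin_rpow_mem h0.le ht
      rwa [abs_of_nonneg p0]) ψ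
  have hi2 := intervalIntegrable_quo_mul hΩ (w := fun _ => 1) measurable_const (by simp) ψ
  simp only [one_mul] at hi2
  have hdiff : |I - hyp Ω ψ| ≤ C * ∫ t in (0 : ℝ)..π, (1 - Real.sin t ^ s) := by
    rw [hI, hyp, ← intervalIntegral.integral_sub hi1 hi2, ← intervalIntegral.integral_const_mul]
    rw [← Real.norm_eq_abs]
    refine intervalIntegral.norm_integral_le_of_norm_le Real.pi_pos.le
      (Eventually.of_forall fun t ht => ?_) ?_
    · have ht := Ioc_subset_Icc_self ht
      obtain ⟨p0, p1⟩ := sin_rpow_mem h0.le ht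
      rw [show Real.sin t ^ s * quo Ω ψ t - quo Ω ψ t = -((1 - Real.sin t ^ s) * quo Ω ψ t) by ring,
        norm_neg, norm_mul, Real.norm_of_nonneg (by linarith), mul_comm]
      exact mul_le_mul_of_nonneg_right (h ψ t ht) (by linarith)
    · refine Continuous.intervalIntegrable ?_ _ _
      exact continuous_const.mul (continuous_const.sub
        (Real.continuous_sin.rpow_const fun _ => Or.inr h0.le))
  rw [dist_comm, Real.dist_eq]
  have e : Omts s Ω φ - omtLim Ω φ = (tauC (2 - s) - τ₀) * I + τ₀ * (I - hyp Ω ψ) +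
      (cC s * (1 / s) - (2 * π)⁻¹) + cC s * Ω ψ := by
    rw [Omts, omtLim, integral_omts_eq hΩ h0 h1, ← hψ, ← hI, ← hτ]
    ring
  rw [e]
  refine lt_of_le_of_lt ?_ hs
  refine (abs_add_le _ _).trans (add_le_add ((abs_add_le _ _).trans (add_le_add
    ((abs_add_le _ _).trans (add_le_add ?_ ?_)) le_rfl)) ?_)
  · rw [abs_mul]
    gcongr
  · rw [abs_mul]
    gcongr
  · rw [abs_mul]
    exact mul_le_mul_of_nonneg_left (hM _) (abs_nonneg _)

/-! ### The principal value -/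

/-- In the variable `t = θ - φ - π/2` the truncation region becomes `sin t ≥ δ`, which is symmetric
under `t ↦ π - t`, so the truncated integral is one of second differences. -/
lemma pvInt_eq {Ω : ℝ → ℝ} (hΩ : SatisfiesH Ω) (φ : ℝ) {δ : ℝ} (hδ : 0 < δ) :
    pvInt Ω φ δ = ∫ t in (0 : ℝ)..π,
      (if δ ≤ Real.sin t then 1 else 0) * quo Ω (φ + π / 2) t := by
  have hc := hΩ.continuous
  set w : ℝ → ℝ := fun x => if δ ≤ x then x ^ (-(2 : ℝ)) else 0 with hw
  have hwm : Measurable w :=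
    Measurable.ite measurableSet_Ici (measurable_id.pow_const _) measurable_const
  have hset : MeasurableSet {θ : ℝ | δ ≤ |Real.cos (φ - θ)|} :=
    (isClosed_le continuous_const (by fun_prop)).measurableSet
  have e1 : pvInt Ω φ δ =
      ∫ θ in (-π)..π, w |Real.cos (φ - θ)| * (Ω θ - Ω (φ + π / 2)) := by
    rw [intervalIntegral.integral_of_le (by linarith [Real.pi_pos]), ← integral_Icc_eq_integral_Ioc,
      pvInt, ofPred_and, ← setIntegral_indicator hset]
    refine setIntegral_congr_fun measurableSet_Icc fun θ _ => ?_
    simp only [indicator, mem_ofPred_eq, hw]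
    split_ifs <;> simp
  rw [e1, integral_weight_eq hΩ.periodic w φ]
  · refine intervalIntegral.integral_congr fun t ht => ?_
    simp only [hw, quo]
    split_ifs with hle
    · rw [Real.rpow_neg (hδ.le.trans hle), Real.rpow_two]
      ring
    · simp
  · obtain ⟨M, hM0, hM⟩ := exists_bound_of_periodic hc hΩ.periodic
    refine (intervalIntegrable_const (c := δ ^ (-(2 : ℝ)) * (M + M))).mono_fun' ?_ ?_
    · refine (Measurable.mul (hwm.comp Real.measurable_sin) ?_).aestronglyMeasurable
      exact Continuous.measurable (by fun_prop)
    · refine Eventually.of_forall fun t => ?_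
      beta_reduce
      rw [norm_mul]
      refine mul_le_mul ?_ ((norm_sub_le _ _).trans (add_le_add (hM _) (hM _))) (norm_nonneg _)
        (by positivity)
      simp only [hw]
      split_ifs with hle
      · rw [Real.norm_of_nonneg (Real.rpow_nonneg (hδ.le.trans hle) _)]
        exact Real.rpow_le_rpow_of_nonpos hδ hle (by norm_num)
      · rw [norm_zero]
        positivity

lemma tendsto_OmtLogFam {Ω : ℝ → ℝ} (hΩ : SatisfiesH Ω) (φ : ℝ) :
    Tendsto (fun δ => OmtLogFam Ω φ δ) (𝓝[>] (0 : ℝ)) (𝓝 (omtLim Ω φ)) := by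
  obtain ⟨C, hC, h⟩ := exists_quo_bound hΩ
  have ht : Tendsto (fun δ : ℝ => ∫ t in (0 : ℝ)..π,
      (if δ ≤ Real.sin t then 1 else 0) * quo Ω (φ + π / 2) t) (𝓝[>] (0 : ℝ))
      (𝓝 (hyp Ω (φ + π / 2))) := by
    refine intervalIntegral.tendsto_integral_filter_of_dominated_convergence (fun _ => C)
      (Eventually.of_forall fun δ => ?_) (Eventually.of_forall fun δ => Eventually.of_forall
        fun t ht => ?_) (by simp) ?_
    · exact ((Measurable.ite (measurableSet_le measurable_const Real.measurable_sin)
        measurable_const measurable_const).mul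
        (measurable_quo_right hΩ.continuous _)).aestronglyMeasurable
    · have := h (φ + π / 2) t (uIoc_subset_Icc_zero_pi ht)
      split_ifs
      · simpa using this
      · simpa using hC
    · filter_upwards [ae_sin_pos] with t ht hm
      refine tendsto_const_nhds.congr' ?_
      filter_upwards [nhdsWithin_le_nhds (gt_mem_nhds (ht hm))] with δ hδ
      rw [if_pos (le_of_lt hδ), one_mul]
  refine ((ht.const_mul (-((2 * π) ^ (-(2 : ℝ))))).add_const (2 * π)⁻¹).congr' ?_
  filter_upwards [self_mem_nhdsWithin] with δ hδ
  rw [OmtLogFam, pvInt_eq hΩ φ hδ]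

/-! ### Trigonometric integrals -/

/-- The Dirichlet kernel `1 + 2 ∑_{j=1}^n cos(2jx) = sin((2n+1)x) / sin x`. -/
def dir (n : ℕ) (x : ℝ) : ℝ := 1 + 2 * ∑ j ∈ Finset.range n, Real.cos (2 * (j + 1) * x)

lemma dir_mul_sin (n : ℕ) (x : ℝ) : dir n x * Real.sin x = Real.sin ((2 * n + 1) * x) := by
  induction n with
  | zero => simp [dir]
  | succ n ih =>
    have e : dir (n + 1) x = dir n x + 2 * Real.cos (2 * (n + 1) * x) := by
      rw [dir, dir, Finset.sum_range_succ]
      ring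
    rw [e, add_mul, ih]
    push_cast
    rw [show (2 * (n : ℝ) + 1) * x = 2 * (n + 1) * x - x by ring,
      show (2 * ((n : ℝ) + 1) + 1) * x = 2 * (n + 1) * x + x by ring, Real.sin_sub, Real.sin_add]
    ring

lemma continuous_dir (n : ℕ) : Continuous (dir n) := by
  unfold dir
  fun_prop

lemma integral_cos_eq_zero (m : ℕ) :
    ∫ x in (0 : ℝ)..π, Real.cos (2 * (m + 1) * x) = 0 := by
  have hm : (2 * ((m : ℝ) + 1)) ≠ 0 := by positivity
  rw [intervalIntegral.integral_comp_mul_left _ hm, integral_cos, mul_zero, Real.sin_zero,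
    show 2 * ((m : ℝ) + 1) * π = ((2 * (m + 1) : ℕ) : ℝ) * π by push_cast; ring,
    Real.sin_nat_mul_pi]
  simp

lemma integral_dir (n : ℕ) : ∫ x in (0 : ℝ)..π, dir n x = π := by
  unfold dir
  rw [intervalIntegral.integral_add (by simp) (Continuous.intervalIntegrable (by fun_prop) _ _),
    intervalIntegral.integral_const_mul, intervalIntegral.integral_finsetSum
      fun j _ => Continuous.intervalIntegrable (by fun_prop) _ _]
  simp [integral_cos_eq_zero]

/-- The Fejér kernel is the sum of the first `n` Dirichlet kernels. -/
lemma sin_sq_eq_sum (n : ℕ) (x : ℝ) :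
    Real.sin (n * x) ^ 2 = (∑ j ∈ Finset.range n, dir j x) * Real.sin x ^ 2 := by
  induction n with
  | zero => simp
  | succ n ih =>
    rw [Finset.sum_range_succ, add_mul, ← ih, pow_two (Real.sin x), ← mul_assoc, dir_mul_sin]
    push_cast
    rw [show (2 * (n : ℝ) + 1) * x = n * x + (n * x + x) by ring,
      show ((n : ℝ) + 1) * x = n * x + x by ring]
    simp only [Real.sin_add, Real.cos_add]
    have h1 := Real.sin_sq_add_cos_sq x
    linear_combination Real.sin (n * x) ^ 2 * h1

/-- The Fejér integral. -/
lemma integral_fejer (n : ℕ) :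
    ∫ x in (0 : ℝ)..π, Real.sin (n * x) ^ 2 / Real.sin x ^ 2 = π * n := by
  have h : ∫ x in (0 : ℝ)..π, Real.sin (n * x) ^ 2 / Real.sin x ^ 2 =
      ∫ x in (0 : ℝ)..π, ∑ j ∈ Finset.range n, dir j x := by
    refine intervalIntegral.integral_congr_ae ?_
    filter_upwards [ae_sin_pos] with t ht hm
    have := (ht hm).ne'
    rw [sin_sq_eq_sum]
    field_simp
  rw [h, intervalIntegral.integral_finsetSum
    fun j _ => (continuous_dir j).intervalIntegrable _ _]
  simp [integral_dir, mul_comm]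

/-- The cosine coefficients of `log sin`, from the primitive
`sin(2nx) log(sin x)` of `2n cos(2nx) log(sin x) + sin(2nx) cot x`; this primitive is continuous up
to the endpoints because `sin(2nx)` is divisible by `sin x`. -/
lemma integral_log_sin_mul_cos (m : ℕ) :
    ∫ x in (0 : ℝ)..π, Real.log (Real.sin x) * Real.cos (2 * (m + 1) * x) =
      -(π / (2 * (m + 1))) := by
  have hs : ∀ x, Real.sin (2 * (m + 1) * x) =
      Real.sin x * (dir m x * Real.cos x + Real.cos ((2 * m + 1) * x)) := by
    intro x
    rw [show 2 * ((m : ℝ) + 1) * x = (2 * m + 1) * x + x by ring, Real.sin_add, ← dir_mul_sin]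
    ring
  have hL : IntervalIntegrable
      (fun x => Real.log (Real.sin x) * Real.cos (2 * (m + 1) * x)) volume 0 π :=
    IntervalIntegrable.mul_continuousOn intervalIntegrable_log_sin
      (Continuous.continuousOn (by fun_prop))
  have hD : IntervalIntegrable (fun x => (dir (m + 1) x + dir m x) / 2) volume 0 π :=
    (((continuous_dir _).add (continuous_dir _)).div_const 2).intervalIntegrable _ _
  have h := integral_eq_of_hasDerivAt_off_countable (a := 0) (b := π) (s := ∅)
    (fun x => Real.sin (2 * (m + 1) * x) * Real.log (Real.sin x))
    (fun x => 2 * (m + 1) * (Real.log (Real.sin x) * Real.cos (2 * (m + 1) * x)) +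
      (dir (m + 1) x + dir m x) / 2) countable_empty ?_ ?_ ((hL.const_mul _).add hD)
  · rw [intervalIntegral.integral_add (hL.const_mul _) hD, intervalIntegral.integral_const_mul,
      intervalIntegral.integral_div, intervalIntegral.integral_add
        ((continuous_dir _).intervalIntegrable _ _) ((continuous_dir _).intervalIntegrable _ _),
      integral_dir, integral_dir] at h
    simp only [Real.sin_pi, Real.sin_zero, Real.log_zero, mul_zero, sub_zero] at h
    have hm : (m : ℝ) + 1 ≠ 0 := by positivity
    field_simp
    linarith
  · have e : (fun x => Real.sin (2 * (m + 1) * x) * Real.log (Real.sin x)) = fun x =>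
        (dir m x * Real.cos x + Real.cos ((2 * m + 1) * x)) *
          (Real.sin x * Real.log (Real.sin x)) := by
      ext x
      rw [hs]
      ring
    rw [e]
    have := continuous_dir m
    have h2 : Continuous fun x => Real.sin x * Real.log (Real.sin x) :=
      Real.continuous_mul_log.comp Real.continuous_sin
    exact Continuous.continuousOn (by fun_prop)
  · intro x hx
    simp only [min_eq_left Real.pi_pos.le, max_eq_right Real.pi_pos.le, sdiff_empty] at hx
    have hp := Real.sin_pos_of_pos_of_lt_pi hx.1 hx.2
    have h1 : HasDerivAt (fun x => Real.sin (2 * ((m : ℝ) + 1) * x))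
        (Real.cos (2 * (m + 1) * x) * (2 * (m + 1) * 1)) x :=
      ((hasDerivAt_id x).const_mul (2 * ((m : ℝ) + 1))).sin
    have h2 := (Real.hasDerivAt_sin x).log hp.ne'
    convert! h1.mul h2 using 1
    have e1 := dir_mul_sin (m + 1) x
    have e2 := dir_mul_sin m x
    push_cast at e1
    rw [show (2 * ((m : ℝ) + 1) + 1) * x = 2 * (m + 1) * x + x by ring, Real.sin_add] at e1
    rw [show (2 * (m : ℝ) + 1) * x = 2 * (m + 1) * x - x by ring, Real.sin_sub] at e2
    field_simp
    linear_combination e1 + e2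

/-! ### Fourier coefficients with respect to the period `π` -/

/-- The unnormalized `k`-th Fourier coefficient of a `π`-periodic real function. -/
def fc (k : ℤ) (f : ℝ → ℝ) : ℂ :=
  ∫ x in (0 : ℝ)..π, Complex.exp (-(2 * k * x) * Complex.I) * (f x : ℂ)

lemma fc_shift {f : ℝ → ℝ} (hf : Function.Periodic f π) (k : ℤ) (u : ℝ) :
    fc k (fun x => f (x + u)) = Complex.exp ((2 * k * u) * Complex.I) * fc k f := by
  set g : ℝ → ℂ := fun y => Complex.exp (-(2 * k * y) * Complex.I) * (f y : ℂ) with hg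
  have hp : Function.Periodic g π := by
    intro x
    simp only [hg, hf x]
    congr 1
    rw [Complex.exp_eq_exp_iff_exists_int]
    refine ⟨-k, ?_⟩
    push_cast
    ring
  have h1 : ∀ x : ℝ, Complex.exp (-(2 * k * x) * Complex.I) * (f (x + u) : ℂ) =
      Complex.exp ((2 * k * u) * Complex.I) * g (x + u) := by
    intro x
    simp only [hg]
    rw [← mul_assoc, ← Complex.exp_add]
    congr 2
    push_cast
    ring
  unfold fc
  simp only [h1]
  rw [intervalIntegral.integral_const_mul, intervalIntegral.integral_comp_add_right]
  congr 1
  have := hp.intervalIntegral_add_eq u 0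
  rw [zero_add] at this
  rw [zero_add, add_comm π u, this]

lemma continuous_mode (k : ℤ) :
    Continuous fun x : ℝ => Complex.exp (-(2 * k * x) * Complex.I) := by
  fun_prop

lemma norm_mode (k : ℤ) (x : ℝ) : ‖Complex.exp (-(2 * k * x) * Complex.I)‖ = 1 := by
  have := Complex.norm_exp_ofReal_mul_I (-(2 * k * x))
  push_cast at this
  exact this

/-- The parameter measure on the half period is finite, in the form used by interval integrals. -/
instance : IsFiniteMeasure (volume.restrict (Set.uIoc 0 π)) := by
  rw [uIoc_of_le Real.pi_pos.le]
  infer_instance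

/-- Fubini's theorem for Fourier coefficients. -/
lemma fc_integral (k : ℤ) {Φ : ℝ → ℝ → ℝ}
    (hΦ : Integrable (Function.uncurry Φ)
      ((volume.restrict (Set.uIoc 0 π)).prod (volume.restrict (Set.uIoc 0 π)))) :
    fc k (fun x => ∫ t in (0 : ℝ)..π, Φ x t) = ∫ t in (0 : ℝ)..π, fc k (fun x => Φ x t) := by
  have hi : Integrable (Function.uncurry fun x t : ℝ =>
      Complex.exp (-(2 * k * x) * Complex.I) * (Φ x t : ℂ))
      ((volume.restrict (Set.uIoc 0 π)).prod (volume.restrict (Set.uIoc 0 π))) := by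
    refine Integrable.bdd_mul (c := 1) (f := fun p : ℝ × ℝ =>
      Complex.exp (-(2 * k * p.1) * Complex.I)) (g := fun p : ℝ × ℝ => (Φ p.1 p.2 : ℂ)) ?_ ?_ ?_
    · exact hΦ.ofReal
    · exact Continuous.aestronglyMeasurable (by fun_prop)
    · exact Eventually.of_forall fun p => (norm_mode k p.1).le
  have hu : Set.uIoc 0 π = Ioc 0 π := uIoc_of_le Real.pi_pos.le
  unfold fc
  have e : ∀ x : ℝ, Complex.exp (-(2 * k * x) * Complex.I) *
      ((∫ t in (0 : ℝ)..π, Φ x t : ℝ) : ℂ) =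
      ∫ t in Ioc 0 π, Complex.exp (-(2 * k * x) * Complex.I) * (Φ x t : ℂ) := by
    intro x
    rw [← intervalIntegral.integral_ofReal, ← intervalIntegral.integral_const_mul,
      intervalIntegral.integral_of_le Real.pi_pos.le]
  simp only [e]
  rw [intervalIntegral_integral_swap (by rwa [hu] at hi ⊢),
    intervalIntegral.integral_of_le Real.pi_pos.le]

/-- `hyp` multiplies the mode `e^{2ikx}` by `-4 ∫₀^π sin²(kt) / sin² t dt = -4π|k|`. -/
lemma fc_hyp {Ω : ℝ → ℝ} (hΩ : SatisfiesH Ω) (k : ℤ) :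
    fc k (hyp Ω) = -(4 * π * k.natAbs) * fc k Ω := by
  obtain ⟨C, hC, h⟩ := exists_quo_bound hΩ
  have hc := hΩ.continuous
  have h1 : fc k (hyp Ω) = ∫ t in (0 : ℝ)..π, fc k (fun x => quo Ω x t) := by
    refine fc_integral k ?_
    refine Integrable.of_bound (C := C) (measurable_quo hc).aestronglyMeasurable ?_
    rw [Measure.prod_restrict]
    refine (ae_restrict_iff' (measurableSet_uIoc.prod measurableSet_uIoc)).2
      (Eventually.of_forall fun p hp => ?_)
    exact h p.1 p.2 (uIoc_subset_Icc_zero_pi hp.2)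
  have h2 : ∀ t : ℝ, fc k (fun x => quo Ω x t) =
      ((Real.sin (k.natAbs * t) ^ 2 / Real.sin t ^ 2 : ℝ) : ℂ) * (-4 * fc k Ω) := by
    intro t
    have i1 : ∀ f : ℝ → ℝ, Continuous f → IntervalIntegrable
        (fun x : ℝ => Complex.exp (-(2 * k * x) * Complex.I) * (f x : ℂ)) volume 0 π :=
      fun f hf => Continuous.intervalIntegrable (by fun_prop) _ _
    have e : fc k (fun x => quo Ω x t) =
        (fc k (fun x => Ω (x + t)) + fc k (fun x => Ω (x + -t)) - 2 * fc k Ω) *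
          ((Real.sin t ^ 2 : ℝ) : ℂ)⁻¹ := by
      unfold fc
      rw [← intervalIntegral.integral_const_mul,
        ← intervalIntegral.integral_add (i1 _ (by fun_prop)) (i1 _ (by fun_prop)),
        ← intervalIntegral.integral_sub ((i1 _ (by fun_prop)).add (i1 _ (by fun_prop)))
          ((i1 _ hc).const_mul 2), ← intervalIntegral.integral_mul_const]
      refine intervalIntegral.integral_congr fun x _ => ?_
      simp only [quo, sd, sub_eq_add_neg]
      push_cast
      ring
    rw [e, fc_shift hΩ.periodic, fc_shift hΩ.periodic]
    have hcos : Complex.exp ((2 * k * t) * Complex.I) +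
        Complex.exp ((2 * k * ((-t : ℝ) : ℂ)) * Complex.I) - 2 =
        ((-4 * Real.sin (k.natAbs * t) ^ 2 : ℝ) : ℂ) := by
      have hsq : Real.sin (k.natAbs * t) ^ 2 = Real.sin (k * t) ^ 2 := by
        rcases Int.natAbs_eq k with hk | hk
        · nth_rewrite 2 [hk]
          simp
        · nth_rewrite 2 [hk]
          simp
      have hd : Real.cos (2 * (k * t)) - 1 = -2 * Real.sin (k * t) ^ 2 := by
        rw [Real.cos_two_mul, Real.cos_sq']
        ring
      have h4 : -4 * Real.sin (k.natAbs * t) ^ 2 = 2 * Real.cos (2 * k * t) - 2 := by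
        rw [hsq, mul_assoc 2]
        linarith
      rw [h4]
      push_cast
      rw [Complex.two_cos]
      simp
    have : Complex.exp ((2 * k * t) * Complex.I) * fc k Ω +
        Complex.exp ((2 * k * ((-t : ℝ) : ℂ)) * Complex.I) * fc k Ω - 2 * fc k Ω =
        ((-4 * Real.sin (k.natAbs * t) ^ 2 : ℝ) : ℂ) * fc k Ω := by
      rw [← hcos]
      ring
    rw [this]
    push_cast
    ring
  simp only [h1, h2]
  rw [intervalIntegral.integral_mul_const, intervalIntegral.integral_ofReal, integral_fejer]
  push_cast
  ring

/-- The convolution of a `π`-periodic function with `log |sin|`. -/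
def logConv (g : ℝ → ℝ) (θ : ℝ) : ℝ := ∫ t in (0 : ℝ)..π, Real.log (Real.sin t) * g (θ + t)

lemma continuous_logConv {g : ℝ → ℝ} (hg : Continuous g) (hp : Function.Periodic g π) :
    Continuous (logConv g) := by
  obtain ⟨M, hM0, hM⟩ := exists_bound_of_periodic hg hp
  refine intervalIntegral.continuous_of_dominated_interval
    (bound := fun t => ‖Real.log (Real.sin t)‖ * M)
    (fun θ => ?_) (fun θ => Eventually.of_forall fun t _ => ?_)
    ((intervalIntegrable_log_sin.norm).mul_const M) (Eventually.of_forall fun t _ => by fun_prop)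
  · refine (Measurable.mul (Real.measurable_log.comp Real.measurable_sin) ?_).aestronglyMeasurable
    exact Continuous.measurable (by fun_prop)
  · rw [norm_mul]
    exact mul_le_mul_of_nonneg_left (hM _) (norm_nonneg _)

lemma periodic_logConv {g : ℝ → ℝ} (hp : Function.Periodic g π) :
    Function.Periodic (logConv g) π := by
  intro θ
  refine intervalIntegral.integral_congr fun t _ => ?_
  simp only [add_right_comm θ π t, hp (θ + t)]

/-- By the reflection `t ↦ π - t` only the cosine part of the mode contributes. -/
lemma integral_log_sin_mul_mode {k : ℤ} (hk : k ≠ 0) :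
    ∫ t in (0 : ℝ)..π, (Real.log (Real.sin t) : ℂ) * Complex.exp ((2 * k * t) * Complex.I) =
      -(π / (2 * k.natAbs)) := by
  set F : ℝ → ℂ := fun t =>
    (Real.log (Real.sin t) : ℂ) * Complex.exp ((2 * k * t) * Complex.I) with hF
  have hlog : IntervalIntegrable (fun t => (Real.log (Real.sin t) : ℂ)) volume 0 π :=
    ⟨intervalIntegrable_log_sin.1.ofReal, intervalIntegrable_log_sin.2.ofReal⟩
  have hFi : IntervalIntegrable F volume 0 π :=
    hlog.mul_continuousOn (Continuous.continuousOn (by fun_prop))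
  have hr : ∀ t, F (π - t) =
      (Real.log (Real.sin t) : ℂ) * Complex.exp (-(2 * k * t) * Complex.I) := by
    intro t
    simp only [hF]
    rw [Real.sin_pi_sub]
    congr 1
    rw [Complex.exp_eq_exp_iff_exists_int]
    refine ⟨k, ?_⟩
    push_cast
    ring
  have h1 : ∫ t in (0 : ℝ)..π, F (π - t) = ∫ t in (0 : ℝ)..π, F t := by
    simp [intervalIntegral.integral_comp_sub_left]
  have h2 : IntervalIntegrable (fun t => F (π - t)) volume 0 π := by
    simpa using (hFi.comp_sub_left π).symm
  have hsum : (∫ t in (0 : ℝ)..π, F t) + ∫ t in (0 : ℝ)..π, F (π - t) =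
      2 * ((∫ t in (0 : ℝ)..π, Real.log (Real.sin t) * Real.cos (2 * k.natAbs * t) : ℝ) : ℂ) := by
    rw [← intervalIntegral.integral_add hFi h2, ← intervalIntegral.integral_ofReal,
      ← intervalIntegral.integral_const_mul]
    refine intervalIntegral.integral_congr fun t _ => ?_
    have hcos : Real.cos (2 * k.natAbs * t) = Real.cos (2 * k * t) := by
      rcases Int.natAbs_eq k with hk | hk
      · nth_rewrite 2 [hk]
        simp
      · nth_rewrite 2 [hk]
        simp
    simp only [hr, hcos]
    have h3 := Complex.two_cos (2 * k * t)
    simp only [hF]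
    push_cast
    linear_combination -(Real.log (Real.sin t) : ℂ) * h3
  rw [h1] at hsum
  obtain ⟨m, hm⟩ := Nat.exists_eq_succ_of_ne_zero (Int.natAbs_ne_zero.2 hk)
  have hv := integral_log_sin_mul_cos m
  rw [hm] at hsum ⊢
  push_cast at hsum hv ⊢
  rw [hv] at hsum
  push_cast at hsum
  linear_combination hsum / 2

lemma fc_logConv {g : ℝ → ℝ} (hg : Continuous g) (hp : Function.Periodic g π) {k : ℤ}
    (hk : k ≠ 0) : fc k (logConv g) = -(π / (2 * k.natAbs)) * fc k g := by
  obtain ⟨M, hM0, hM⟩ := exists_bound_of_periodic hg hp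
  have hl : Integrable (fun t => Real.log (Real.sin t)) (volume.restrict (Set.uIoc 0 π)) :=
    intervalIntegrable_iff.1 intervalIntegrable_log_sin
  have h1 : fc k (logConv g) =
      ∫ t in (0 : ℝ)..π, fc k (fun x => Real.log (Real.sin t) * g (x + t)) := by
    refine fc_integral k ?_
    refine Integrable.mul_bdd (c := M) (f := fun p : ℝ × ℝ => Real.log (Real.sin p.2))
      (g := fun p : ℝ × ℝ => g (p.1 + p.2)) ?_ ?_ ?_
    · exact hl.comp_snd _
    · exact Continuous.aestronglyMeasurable (by fun_prop)
    · exact Eventually.of_forall fun p => hM _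
  have h2 : ∀ t : ℝ, fc k (fun x => Real.log (Real.sin t) * g (x + t)) =
      (Real.log (Real.sin t) : ℂ) * Complex.exp ((2 * k * t) * Complex.I) * fc k g := by
    intro t
    rw [mul_assoc, ← fc_shift hp, fc, fc, ← intervalIntegral.integral_const_mul]
    refine intervalIntegral.integral_congr fun x _ => ?_
    push_cast
    ring
  simp only [h1, h2]
  rw [intervalIntegral.integral_mul_const, integral_log_sin_mul_mode hk]

/-- A continuous `π`-periodic function all of whose nonconstant modes vanish is constant, since
its Fourier series is then trivially summable. -/
lemma const_of_fc {f : ℝ → ℝ} (hf : Continuous f) (hp : Function.Periodic f π)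
    (h : ∀ k : ℤ, k ≠ 0 → fc k f = 0) : ∃ c, ∀ x, f x = c := by
  have : Fact (0 < π) := ⟨Real.pi_pos⟩
  have hp' : Function.Periodic (fun x => (f x : ℂ)) π := fun x => by simp only [hp x]
  set F : C(AddCircle π, ℂ) :=
    ⟨hp'.lift, continuous_coinduced_dom.mpr (Complex.continuous_ofReal.comp hf)⟩ with hF
  have hFx : ∀ x : ℝ, F x = f x := fun x => hp'.lift_coe x
  have hco : ∀ k : ℤ, k ≠ 0 → fourierCoeff F k = 0 := by
    intro k hk
    rw [fourierCoeff_eq_intervalIntegral F k 0, zero_add]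
    have : ∫ x in (0 : ℝ)..π, (fourier (-k) (x : AddCircle π) : ℂ) • F x = fc k f := by
      refine intervalIntegral.integral_congr fun x _ => ?_
      simp only [fourier_coe_apply, hFx, smul_eq_mul]
      congr 2
      have : (π : ℂ) ≠ 0 := by exact_mod_cast Real.pi_ne_zero
      push_cast
      field_simp
    rw [this, h k hk, smul_zero]
  have hsum : Summable (fourierCoeff F) :=
    summable_of_ne_finset_zero (s := {0}) fun k hk => hco k (by simpa using hk)
  refine ⟨(fourierCoeff F 0).re, fun x => ?_⟩
  have h1 := has_pointwise_sum_fourier_series_of_summable hsum (x : AddCircle π)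
  have h2 := hasSum_single (f := fun i => fourierCoeff F i • fourier i (x : AddCircle π)) 0
    fun k hk => by rw [hco k hk, zero_smul]
  have h3 := h1.unique h2
  rw [hFx] at h3
  simp only [fourier_zero, smul_eq_mul, mul_one] at h3
  rw [← h3, Complex.ofReal_re]

/-! ### The inversion formula -/

/-- On the mode `k ≠ 0`, `hyp` multiplies by `-4π|k|` and `logConv` by `-π/(2|k|)`, so the
composition multiplies by `2π²`. -/
lemma exists_const_logConv_hyp {Ω : ℝ → ℝ} (hΩ : SatisfiesH Ω) :
    ∃ c, ∀ θ, Ω θ = 2 * (2 * π) ^ (-(2 : ℝ)) * logConv (hyp Ω) θ + c := by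
  have hA := continuous_hyp hΩ
  have hpA := periodic_hyp hΩ.periodic
  have hB := continuous_logConv hA hpA
  have hpB := periodic_logConv hpA
  have hc := hΩ.continuous
  set a : ℝ := 2 * (2 * π) ^ (-(2 : ℝ)) with ha
  have ha' : a = 1 / (2 * π ^ 2) := by
    rw [ha, Real.rpow_neg (by positivity), Real.rpow_two]
    field_simp
  obtain ⟨c, hc⟩ := const_of_fc (f := fun θ => Ω θ - a * logConv (hyp Ω) θ) (by fun_prop)
    (fun θ => by simp only [hΩ.periodic θ, hpB θ]) (by
      intro k hk
      have i1 : ∀ f : ℝ → ℝ, Continuous f → IntervalIntegrable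
          (fun x : ℝ => Complex.exp (-(2 * k * x) * Complex.I) * (f x : ℂ)) volume 0 π :=
        fun f hf => Continuous.intervalIntegrable (by fun_prop) _ _
      have e : fc k (fun θ => Ω θ - a * logConv (hyp Ω) θ) =
          fc k Ω - a * fc k (logConv (hyp Ω)) := by
        unfold fc
        rw [← intervalIntegral.integral_const_mul,
          ← intervalIntegral.integral_sub (i1 _ hc) ((i1 _ hB).const_mul _)]
        refine intervalIntegral.integral_congr fun x _ => ?_
        push_cast
        ring
      rw [e, fc_logConv hA hpA hk, fc_hyp hΩ, ha']
      have h1 : (π : ℂ) ≠ 0 := by exact_mod_cast Real.pi_ne_zero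
      have h2 : (k.natAbs : ℂ) ≠ 0 := by exact_mod_cast Int.natAbs_ne_zero.2 hk
      push_cast
      field_simp
      ring)
  exact ⟨c, fun θ => by linarith [hc θ]⟩

/-- The substitution `φ = θ + π/2 + t` turns the logarithmic integral of `omtLim Ω` into
`logConv (hyp Ω)`, up to a constant coming from the term `1/(2π)` of `omtLim`. -/
lemma integral_log_cos_mul_omtLim {Ω : ℝ → ℝ} (hΩ : SatisfiesH Ω) (θ : ℝ) :
    ∫ φ in (-π)..π, Real.log |Real.cos (φ - θ)| * omtLim Ω φ =
      -(2 * (2 * π) ^ (-(2 : ℝ)) * logConv (hyp Ω) θ) +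
        2 * (2 * π)⁻¹ * ∫ t in (0 : ℝ)..π, Real.log (Real.sin t) := by
  have hA := continuous_hyp hΩ
  have hpA := periodic_hyp hΩ.periodic
  have hper : Function.Periodic (fun φ => Real.log |Real.cos (φ - θ)| * omtLim Ω φ) π := by
    intro φ
    simp only [omtLim]
    rw [show φ + π - θ = φ - θ + π by ring, Real.cos_add_pi, abs_neg,
      show φ + π + π / 2 = φ + π / 2 + π by ring, hpA]
  have hlog : IntervalIntegrable (fun t => Real.log (Real.sin t)) volume 0 π :=
    intervalIntegrable_log_sin
  have hprod : IntervalIntegrable (fun t => Real.log (Real.sin t) * hyp Ω (θ + t)) volume 0 π :=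
    hlog.mul_continuousOn (Continuous.continuousOn (by fun_prop))
  have e : ∀ t, Real.log |Real.cos (θ + π / 2 + t - θ)| * omtLim Ω (θ + π / 2 + t) =
      -((2 * π) ^ (-(2 : ℝ))) * (Real.log (Real.sin t) * hyp Ω (θ + t)) +
        (2 * π)⁻¹ * Real.log (Real.sin t) := by
    intro t
    rw [show θ + π / 2 + t - θ = t + π / 2 by ring, Real.cos_add_pi_div_two, abs_neg,
      Real.log_abs, omtLim, show θ + π / 2 + t + π / 2 = θ + t + π by ring, hpA]
    ring
  have hi := (hprod.const_mul (-((2 * π) ^ (-(2 : ℝ))))).add (hlog.const_mul (2 * π)⁻¹)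
  rw [integral_two_periods hper (θ + π / 2) (by simpa only [e] using hi)]
  simp only [e]
  rw [intervalIntegral.integral_add (hprod.const_mul _) (hlog.const_mul _),
    intervalIntegral.integral_const_mul, intervalIntegral.integral_const_mul, logConv]
  ring

/-- the logarithmic potential as a limit of Riesz-type potentials:
(i) `W_{(s)} → W_log` uniformly on compact subsets of `ℝ² \ {0}` as `s → 0⁺`;
(ii) the principal value limit defining `Ω̃_log` exists, and `Ω̃_{(s)} → Ω̃_log`
uniformly; (iii) the inversion formula
`Ω(θ) = -∫_{-π}^{π} ln|cos(φ-θ)| Ω̃_log(φ) dφ + const` holds. -/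
theorem statement14 (Ω : ℝ → ℝ) (hΩ : SatisfiesH Ω) :
    (∀ K : Set (ℝ × ℝ), IsCompact K → (0 : ℝ × ℝ) ∉ K →
      TendstoUniformlyOn (fun s x => Wsfam s Ω x) (Wlog Ω) (𝓝[>] (0 : ℝ)) K) ∧
    ∃ OL : ℝ → ℝ,
      (∀ φ, Tendsto (fun δ => OmtLogFam Ω φ δ) (𝓝[>] (0 : ℝ)) (𝓝 (OL φ))) ∧
      TendstoUniformly (fun s φ => Omts s Ω φ) OL (𝓝[>] (0 : ℝ)) ∧
      ∃ c : ℝ, ∀ θ : ℝ,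
        Ω θ = -(∫ φ in (-π)..π, Real.log |Real.cos (φ - θ)| * OL φ) + c := by
  refine ⟨fun K hK h0 => tendstoUniformlyOn_Wsfam hΩ hK h0, omtLim Ω,
    tendsto_OmtLogFam hΩ, tendstoUniformly_Omts hΩ, ?_⟩
  obtain ⟨c, hc⟩ := exists_const_logConv_hyp hΩ
  refine ⟨2 * (2 * π)⁻¹ * (∫ t in (0 : ℝ)..π, Real.log (Real.sin t)) + c, fun θ => ?_⟩
  rw [integral_log_cos_mul_omtLim hΩ θ, hc θ]
  ring

end Aniso
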